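/- For every graph G with n vertices and m edges, ψ_3(G) ≤ (2n + m)/6. -/

import Mathlib

open SimpleGraph

variable {V : Type*}

/-- `S` is a `k`-path vertex cover of `G`: every path on `k` vertices meets `S`. -/
def IsPathVC (G : SimpleGraph V) (k : ℕ) (S : Set V) : Prop :=
  ∀ ⦃u v : V⦄ (w : G.Walk u v), w.IsPath → w.length + 1 = k → ∃ x ∈ w.support, x ∈ S

/-- `psi G k` is the minimum cardinality of a `k`-path vertex cover of `G`. -/
noncomputable def psi (G : SimpleGraph V) (k : ℕ) : ℕ :=
  sInf {n | ∃ S : Set V, IsPathVC G k S ∧ S.ncard = n}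

open Classical in
/-- number of neighbours of `v` in `A` -/
noncomputable def dg (G : SimpleGraph V) (A : Finset V) (v : V) : ℕ := (A.filter (G.Adj v)).card

/-- degree sum inside `A` -/
noncomputable def es (G : SimpleGraph V) (A : Finset V) : ℕ := ∑ v ∈ A, dg G A v

open Classical in
lemma dg_insert (G : SimpleGraph V) (A : Finset V) (v w : V) (hv : v ∉ A) :
    dg G (insert v A) w = dg G A w + if G.Adj w v then 1 else 0 := by
  unfold dg
  rw [Finset.filter_insert]
  split_ifs with h
  · rw [Finset.card_insert_of_notMem (by simp [hv])]
  · rfl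

open Classical in
lemma es_insert (G : SimpleGraph V) (A : Finset V) (v : V) (hv : v ∉ A) :
    es G (insert v A) = es G A + 2 * dg G A v := by
  unfold es
  rw [Finset.sum_insert hv, dg_insert G A v v hv,
    Finset.sum_congr rfl (fun w _ => dg_insert G A v w hv), Finset.sum_add_distrib]
  have : (∑ w ∈ A, if G.Adj w v then 1 else 0) = dg G A v := by
    unfold dg
    rw [Finset.card_filter]
    exact Finset.sum_congr rfl (fun w _ => by simp [G.adj_comm])
  rw [this]
  simp
  ring

lemma dg_mono (G : SimpleGraph V) {A B : Finset V} (h : A ⊆ B) (v : V) : dg G A v ≤ dg G B v := by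
  classical
  exact Finset.card_le_card (Finset.filter_subset_filter _ h)

lemma dg_zero (G : SimpleGraph V) {A : Finset V} {v : V} (h : dg G A v = 0) :
    ∀ w ∈ A, ¬ G.Adj v w := by
  classical
  unfold dg at h
  rw [Finset.card_eq_zero, Finset.filter_eq_empty_iff] at h
  exact fun w hw => h hw

open Classical in
/-- adding a vertex without neighbours keeps the set good -/
lemma good_insert (G : SimpleGraph V) (T : Finset V) (v : V) (hv : v ∉ T)
    (hT : ∀ w ∈ T, dg G T w ≤ 1) (h0 : dg G T v = 0) :
    ∀ w ∈ insert v T, dg G (insert v T) w ≤ 1 := by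
  intro w hw
  rw [dg_insert G T v w hv]
  rcases Finset.mem_insert.1 hw with rfl | hw
  · simp [h0]
  · have : ¬ G.Adj w v := fun h => dg_zero G h0 w hw h.symm
    simp [this, hT w hw]

open Classical in
lemma lovasz (G : SimpleGraph V) (A : Finset V) (h3 : ∀ v ∈ A, dg G A v ≤ 3) :
    ∃ B C : Finset V, B ∪ C = A ∧ Disjoint B C ∧ (∀ v ∈ B, dg G B v ≤ 1) ∧
      (∀ v ∈ C, dg G C v ≤ 1) := by
  obtain ⟨B, hB, hmin⟩ := Finset.exists_min_image A.powerset
    (fun B => es G B + es G (A \ B)) ⟨∅, by simp⟩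
  rw [Finset.mem_powerset] at hB
  have hsum : ∀ v, dg G B v + dg G (A \ B) v = dg G A v := by
    intro v
    unfold dg
    rw [← Finset.card_union_of_disjoint, ← Finset.filter_union, Finset.union_sdiff_of_subset hB]
    exact Finset.disjoint_filter_filter Finset.disjoint_sdiff
  refine ⟨B, A \ B, Finset.union_sdiff_of_subset hB, Finset.disjoint_sdiff, ?_, ?_⟩
  · intro v hv
    have hm := hmin (B.erase v) (Finset.mem_powerset.2 ((Finset.erase_subset _ _).trans hB))
    have e1 : A \ B.erase v = insert v (A \ B) := by
      ext x; simp only [Finset.mem_sdiff, Finset.mem_erase, Finset.mem_insert]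
      by_cases hx : x = v
      · subst hx; simp [hB hv]
      · simp [hx]
    have e2 := es_insert G (B.erase v) v (by simp)
    have e3 := dg_insert G (B.erase v) v v (by simp)
    rw [Finset.insert_erase hv] at e2 e3
    have e4 := es_insert G (A \ B) v (by simp [hv])
    simp only [e1] at hm
    simp at e3
    have := hsum v
    have := h3 v (hB hv)
    omega
  · intro v hv
    have hv' := Finset.mem_sdiff.1 hv
    have hm := hmin (insert v B) (Finset.mem_powerset.2 (Finset.insert_subset hv'.1 hB))
    have e1 : A \ insert v B = (A \ B).erase v := by
      ext x; simp only [Finset.mem_sdiff, Finset.mem_erase, Finset.mem_insert]; tauto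
    have e2 := es_insert G ((A \ B).erase v) v (by simp)
    have e3 := dg_insert G ((A \ B).erase v) v v (by simp)
    rw [Finset.insert_erase hv] at e2 e3
    have e4 := es_insert G B v hv'.2
    simp only [e1] at hm
    simp at e3
    have := hsum v
    have := h3 v hv'.1
    omega

open Classical in
lemma main_ind (G : SimpleGraph V) : ∀ (n : ℕ) (A : Finset V), A.card = n →
    ∃ T ⊆ A, (∀ v ∈ T, dg G T v ≤ 1) ∧ 8 * A.card ≤ 12 * T.card + es G A := by
  intro n
  induction n using Nat.strong_induction_on with
  | _ n ih =>
  intro A hA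
  by_cases h4 : ∃ v ∈ A, 4 ≤ dg G A v ∨ dg G A v = 0
  · obtain ⟨v, hv, hd⟩ := h4
    have hc := Finset.card_erase_add_one hv
    obtain ⟨T, hTA, hT, hcard⟩ := ih (A.erase v).card (by omega) (A.erase v) rfl
    have hvT : v ∉ T := fun h => by simpa using hTA h
    have e2 := es_insert G (A.erase v) v (by simp)
    have e3 := dg_insert G (A.erase v) v v (by simp)
    rw [Finset.insert_erase hv] at e2 e3
    simp at e3
    rcases hd with hd | hd
    · exact ⟨T, hTA.trans (Finset.erase_subset _ _), hT, by omega⟩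
    · refine ⟨insert v T, Finset.insert_subset hv (hTA.trans (Finset.erase_subset _ _)),
        good_insert G T v hvT hT ?_, ?_⟩
      · have := dg_mono G (hTA.trans (Finset.erase_subset v A)) v
        omega
      · rw [Finset.card_insert_of_notMem hvT]; omega
  by_cases h1 : ∃ v ∈ A, dg G A v = 1
  · obtain ⟨v, hv, hd⟩ := h1
    obtain ⟨u, hu⟩ := Finset.card_eq_one.1 hd
    have huA : u ∈ A ∧ G.Adj v u := by
      have : u ∈ A.filter (G.Adj v) := by rw [hu]; simp
      simpa using this
    obtain ⟨huA, hadj⟩ := huA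
    have hne : u ≠ v := hadj.ne'
    have huA' : u ∈ A.erase v := by simp [hne, huA]
    have hc := Finset.card_erase_add_one hv
    have hc' := Finset.card_erase_add_one huA'
    obtain ⟨T, hTA, hT, hcard⟩ := ih ((A.erase v).erase u).card (by omega) _ rfl
    have huT : u ∉ T := fun h => by simpa using hTA h
    have hvT : v ∉ T := fun h => by simpa using hTA h
    have hTA' : T ⊆ A := hTA.trans ((Finset.erase_subset _ _).trans (Finset.erase_subset _ _))
    have e2 := es_insert G (A.erase v) v (by simp)
    have e3 := dg_insert G (A.erase v) v v (by simp)
    rw [Finset.insert_erase hv] at e2 e3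
    simp at e3
    have f2 := es_insert G ((A.erase v).erase u) u (by simp)
    have f3 := dg_insert G ((A.erase v).erase u) u v (by simp)
    rw [Finset.insert_erase huA'] at f2 f3
    simp [hadj] at f3
    have g := dg_mono G hTA v
    have g' := dg_mono G hTA u
    have hvT0 : dg G T v = 0 := by omega
    have good1 := good_insert G T v hvT hT hvT0
    by_cases hz : dg G ((A.erase v).erase u) u = 0
    · refine ⟨insert u (insert v T), Finset.insert_subset huA (Finset.insert_subset hv hTA'),
        ?_, ?_⟩
      · have huT' : u ∉ insert v T := by simp [huT, hne]
        intro w hw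
        rw [dg_insert G _ u w huT', dg_insert G _ v w hvT]
        have hu0 : dg G T u = 0 := by omega
        rcases Finset.mem_insert.1 hw with rfl | hw
        · simp [hu0, hadj.symm]
        rcases Finset.mem_insert.1 hw with rfl | hw
        · simp [hvT0, hadj]
        · have a1 : ¬ G.Adj w v := fun h => dg_zero G hvT0 w hw h.symm
          have a2 : ¬ G.Adj w u := fun h => dg_zero G hu0 w hw h.symm
          simp [a1, a2, hT w hw]
      · rw [Finset.card_insert_of_notMem (by simp [huT, hne]), Finset.card_insert_of_notMem hvT]
        omega
    · refine ⟨insert v T, Finset.insert_subset hv hTA', good1, ?_⟩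
      rw [Finset.card_insert_of_notMem hvT]
      omega
  · push Not at h4 h1
    obtain ⟨B, C, hU, hD, hB, hC⟩ := lovasz G A (fun v hv => by have := h4 v hv; omega)
    have hcard : B.card + C.card = A.card := by rw [← hU, Finset.card_union_of_disjoint hD]
    have hes : A.card * 2 ≤ es G A := by
      unfold es
      rw [← smul_eq_mul]
      exact Finset.card_nsmul_le_sum _ _ _ (fun v hv => by
        have := h4 v hv; have := h1 v hv; omega)
    rcases le_total B.card C.card with h | h
    · exact ⟨C, hU ▸ Finset.subset_union_right, hC, by omega⟩
    · exact ⟨B, hU ▸ Finset.subset_union_left, hB, by omega⟩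

theorem psi_three_sparse [Fintype V] (G : SimpleGraph V) :
    (psi G 3 : ℚ) ≤ (2 * (Fintype.card V : ℚ) + (G.edgeSet.ncard : ℚ)) / 6 := by
  classical
  obtain ⟨T, -, hT, hcard⟩ := main_ind G _ (Finset.univ : Finset V) rfl
  have hes : es G Finset.univ = 2 * G.edgeSet.ncard := by
    have h := G.sum_degrees_eq_twice_card_edges
    rw [← SimpleGraph.coe_edgeFinset G, Set.ncard_coe_finset, ← h]
    unfold es dg
    refine Finset.sum_congr rfl (fun v _ => ?_)
    rw [← SimpleGraph.card_neighborFinset_eq_degree, SimpleGraph.neighborFinset_eq_filter]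
  have hle : psi G 3 ≤ Tᶜ.card := by
    refine Nat.sInf_le ⟨((Tᶜ : Finset V) : Set V), ?_, Set.ncard_coe_finset _⟩
    intro u v w hp hl
    match w, hp, hl with
    | .cons (v := b) hab (.cons (v := c) hbc .nil), hp, _ =>
      by_contra hcon
      simp at hcon
      obtain ⟨hu, hb, hc⟩ := hcon
      simp at hp
      have : ({u, c} : Finset V) ⊆ T.filter (G.Adj b) := by
        intro x hx
        simp at hx
        rcases hx with rfl | rfl
        · simp [hu, hab.symm]
        · simp [hc, hbc]
      have h2 := Finset.card_le_card this
      have h3 := hT b hb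
      unfold dg at h3
      rw [Finset.card_pair (by tauto)] at h2
      omega
  have hc := Finset.card_add_card_compl T
  rw [Finset.card_univ] at hcard
  have : 6 * psi G 3 ≤ 2 * Fintype.card V + G.edgeSet.ncard := by omega
  have : (6 : ℚ) * psi G 3 ≤ 2 * Fintype.card V + G.edgeSet.ncard := by exact_mod_cast this
  linarith
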